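/- arXiv:2105.08680 — 5 statements merged into one kernel-verified Lean document; each statement's English description precedes it below -/
import Mathlib

section
/- Let λ > μ be two partitions of n in the dominance order and set q = q(λ, μ). Then there exist partitions λ = λ⁰ > λ¹ > ⋯ > λ^q = μ of n such that q(λ^i, λ^{i+1}) = 1 for each i = 0, …, q − 1. Moreover, these partitions can be chosen so that for each row index r the sequence λ⁰_r, λ¹_r, …, λ^q_r is monotone, and for each column index c the sequence of dual parts λ̂⁰_c, λ̂¹_c, …, λ̂^q_c is monotone. -/
/-!
The number `q(λ, μ)` counts the boxes of the diagram of `λ` outside that of `μ`. The chain is built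
one box at a time: a box of `λ` outside `μ` is moved to a position of `μ` outside `λ`, so that
`q(·, μ)` drops by one and the induction runs on `q`.

For the move, let `b` be the first row with `λ_b < μ_b` and `a` the last row before `b` with
`λ_a > μ_a`; both exist because `λ ≠ μ` and `λ` dominates `μ`. Since `λ_i = μ_i` strictly between
`a` and `b`, moving a box from row `a` to row `b` leaves a partition. Since `λ_i ≥ μ_i` for all
`i < b` and `λ_a > μ_a`, the partial sums of `λ` strictly exceed those of `μ` from row `a` up to
row `b - 1`, so the new partition still dominates `μ` (`exists_move`).

Every row of the new partition lies between the corresponding rows of `λ` and `μ`. The columns of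
`λ` and `μ` are nested as sets of rows (both are initial segments), so the columns of the new
partition are also intermediate (`dualPart_between`). Finally, a sequence each of whose steps goes
towards a fixed target without passing it is monotone (`monotone_or_antitone_of_towards`).
-/


/-- `l` is a partition of `n`, written as a nonincreasing sequence of
nonnegative integers padded with trailing zeros. -/
def IsPartitionOf (n : ℕ) (l : ℕ → ℕ) : Prop :=
  Antitone l ∧ (∀ i, n ≤ i → l i = 0) ∧ ∑ i ∈ Finset.range n, l i = n

/-- Dominance order on partitions: `l` dominates `m` iff every partial sum of `l`
is at least the corresponding partial sum of `m`. -/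
def Dominates (l m : ℕ → ℕ) : Prop :=
  ∀ j, ∑ i ∈ Finset.range j, m i ≤ ∑ i ∈ Finset.range j, l i

/-- The `(c+1)`-st part (0-indexed `c`) of the dual partition of `l`:
the number of indices `i` with `l i ≥ c + 1`. -/
def dualPart (n : ℕ) (l : ℕ → ℕ) (c : ℕ) : ℕ :=
  ((Finset.range n).filter fun i => c + 1 ≤ l i).card

/-- `q(λ, μ) = (1/2) Σ_i |λ_i − μ_i|`. -/
def qdiff (n : ℕ) (l m : ℕ → ℕ) : ℕ :=
  (∑ i ∈ Finset.range n, ((l i : ℤ) - (m i : ℤ)).natAbs) / 2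

/-- `c(λ, μ) = Σ_i C(λ_i + 1, 2) − Σ_i C(μ_i + 1, 2)`. -/
def cdiff (n : ℕ) (l m : ℕ → ℕ) : ℤ :=
  (∑ i ∈ Finset.range n, ((l i + 1).choose 2 : ℤ)) -
    ∑ i ∈ Finset.range n, ((m i + 1).choose 2 : ℤ)

/-- `r(λ, μ) = Σ_j C(μ̂_j + 1, 2) − Σ_j C(λ̂_j + 1, 2)`. -/
def rdiff (n : ℕ) (l m : ℕ → ℕ) : ℤ :=
  (∑ j ∈ Finset.range n, ((dualPart n m j + 1).choose 2 : ℤ)) -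
    ∑ j ∈ Finset.range n, ((dualPart n l j + 1).choose 2 : ℤ)

/-- `y` lies (weakly) between `x` and the target `t`. -/
def Towards (x y t : ℕ) : Prop :=
  (x ≤ y ∧ y ≤ t) ∨ (t ≤ y ∧ y ≤ x)

/-- The sequence obtained from `l` by moving one box from row `a` to row `b`.
It is meant for `a ≠ b` and `0 < l a`. -/
def moveBox (l : ℕ → ℕ) (a b : ℕ) : ℕ → ℕ :=
  fun i => if i = a then l i - 1 else if i = b then l i + 1 else l i

theorem monotone_or_antitone_of_towards (u : ℕ → ℕ) (t q : ℕ)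
    (h : ∀ i, i < q → Towards (u i) (u (i + 1)) t) :
    (∀ i j, i ≤ j → j ≤ q → u i ≤ u j) ∨ (∀ i j, i ≤ j → j ≤ q → u j ≤ u i) := by
  unfold Towards at h
  rcases le_total (u 0) t with h0 | h0
  · left
    have hb : ∀ i, i ≤ q → u i ≤ t := by
      intro i
      induction i with
      | zero => intro _; exact h0
      | succ k ih => intro hk; have := ih (by omega); have := h k (by omega); omega
    intro i j hij
    induction j, hij using Nat.le_induction with
    | base => intro _; exact le_rfl
    | succ k hk ih =>
      intro hq
      have := ih (by omega)
      have := h k (by omega)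
      have := hb k (by omega)
      omega
  · right
    have hb : ∀ i, i ≤ q → t ≤ u i := by
      intro i
      induction i with
      | zero => intro _; exact h0
      | succ k ih => intro hk; have := ih (by omega); have := h k (by omega); omega
    intro i j hij
    induction j, hij using Nat.le_induction with
    | base => intro _; exact le_rfl
    | succ k hk ih =>
      intro hq
      have := ih (by omega)
      have := h k (by omega)
      have := hb k (by omega)
      omega

/-- If every row of `y` lies between the rows of the partitions `l` and `m`, so does every
column. -/
theorem dualPart_between (n : ℕ) (l m y : ℕ → ℕ) (hl : Antitone l) (hm : Antitone m)
    (h : ∀ r, Towards (l r) (y r) (m r)) (c : ℕ) :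
    Towards (dualPart n l c) (dualPart n y c) (dualPart n m c) := by
  unfold Towards at h
  -- The sets of rows meeting column `c` in `l` and in `m` are nested.
  have hnest : (∀ i, c + 1 ≤ l i → c + 1 ≤ m i) ∨ (∀ i, c + 1 ≤ m i → c + 1 ≤ l i) := by
    by_contra! hcon
    obtain ⟨⟨i, hi1, hi2⟩, j, hj1, hj2⟩ := hcon
    rcases le_total i j with hij | hij
    · have := hm hij; omega
    · have := hl hij; omega
  have key : ∀ u v : ℕ → ℕ, (∀ i, c + 1 ≤ u i → c + 1 ≤ v i) →
      dualPart n u c ≤ dualPart n v c := fun u v huv =>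
    Finset.card_le_card (Finset.monotone_filter_right _ fun i _ hi => huv i hi)
  rcases hnest with hn | hn
  · refine Or.inl ⟨key _ _ fun i hi => ?_, key _ _ fun i hi => ?_⟩ <;>
    · have := h i; have := hn i; omega
  · refine Or.inr ⟨key _ _ fun i hi => ?_, key _ _ fun i hi => ?_⟩ <;>
    · have := h i; have := hn i; omega

theorem sum_moveBox (l : ℕ → ℕ) {a b : ℕ} (hab : a ≠ b) (ha : 0 < l a) (j : ℕ) :
    ∑ i ∈ Finset.range j, moveBox l a b i + (if a < j then 1 else 0) =
      ∑ i ∈ Finset.range j, l i + (if b < j then 1 else 0) := by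
  have h : ∑ i ∈ Finset.range j, (moveBox l a b i + if a = i then 1 else 0) =
      ∑ i ∈ Finset.range j, (l i + if b = i then 1 else 0) := by
    refine Finset.sum_congr rfl fun i _ => ?_
    unfold moveBox
    grind
  simpa [Finset.sum_add_distrib] using h

/-- Moving a box towards `m` lowers `q(·, m)` by one. -/
theorem qdiff_moveBox (n : ℕ) (l m : ℕ → ℕ) {a b : ℕ} (hab : a ≠ b) (han : a < n) (hbn : b < n)
    (ha : m a < l a) (hb : l b < m b) :
    qdiff n (moveBox l a b) m + 1 = qdiff n l m := by
  have h : ∑ i ∈ Finset.range n, ((l i : ℤ) - (m i : ℤ)).natAbs =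
      ∑ i ∈ Finset.range n, (((moveBox l a b i : ℤ) - (m i : ℤ)).natAbs +
        ((if a = i then 1 else 0) + if b = i then 1 else 0)) := by
    refine Finset.sum_congr rfl fun i _ => ?_
    unfold moveBox
    split_ifs <;> subst_vars <;> omega
  simp only [Finset.sum_add_distrib, Finset.sum_ite_eq, Finset.mem_range, han, hbn, if_true] at h
  unfold qdiff
  omega

theorem qdiff_self_moveBox (n : ℕ) (l : ℕ → ℕ) {a b : ℕ} (hab : a ≠ b) (han : a < n) (hbn : b < n)
    (ha : 0 < l a) : qdiff n l (moveBox l a b) = 1 := by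
  have h : ∑ i ∈ Finset.range n, ((l i : ℤ) - (moveBox l a b i : ℤ)).natAbs =
      ∑ i ∈ Finset.range n, ((if a = i then 1 else 0) + if b = i then 1 else 0) := by
    refine Finset.sum_congr rfl fun i _ => ?_
    unfold moveBox
    split_ifs <;> subst_vars <;> omega
  simp only [Finset.sum_add_distrib, Finset.sum_ite_eq, Finset.mem_range, han, hbn, if_true] at h
  unfold qdiff
  omega

/-- The rows of the move: `b` is the first row where `l` is shorter than `m`, and `a` is the last
row above `b` where `l` is longer than `m`. -/
theorem exists_rows (n : ℕ) (l m : ℕ → ℕ) (hl : IsPartitionOf n l) (hm : IsPartitionOf n m)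
    (hdom : Dominates l m) (hne : l ≠ m) :
    ∃ a b, a < b ∧ b < n ∧ m a < l a ∧ l b < m b ∧ (∀ i, i < b → m i ≤ l i) ∧
      (∀ i, a < i → i < b → l i = m i) := by
  obtain ⟨-, hl0, hls⟩ := hl
  obtain ⟨-, hm0, hms⟩ := hm
  have hex : ∃ b, l b < m b := by
    by_contra! hcon
    apply hne
    have hEq := (Finset.sum_eq_sum_iff_of_le (fun i (_ : i ∈ Finset.range n) => hcon i)).1
      (hms.trans hls.symm)
    funext i
    rcases lt_or_ge i n with hi | hi
    · exact (hEq i (Finset.mem_range.2 hi)).symm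
    · rw [hl0 i hi, hm0 i hi]
  classical
  set b := Nat.find hex with hbdef
  have hb : l b < m b := Nat.find_spec hex
  have hmin : ∀ i, i < b → m i ≤ l i := fun i hi => not_lt.1 (Nat.find_min hex hi)
  have hbn : b < n := by
    by_contra! hcon
    have := hm0 b hcon
    omega
  have hlt : ∑ i ∈ Finset.range b, m i < ∑ i ∈ Finset.range b, l i := by
    have := hdom (b + 1)
    rw [Finset.sum_range_succ, Finset.sum_range_succ] at this
    omega
  obtain ⟨a₀, ha₀, ha₀'⟩ := Finset.exists_lt_of_sum_lt hlt
  obtain ⟨a, ha, hmax⟩ := Finset.exists_max_image ((Finset.range b).filter fun i => m i < l i) id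
    ⟨a₀, Finset.mem_filter.2 ⟨ha₀, ha₀'⟩⟩
  simp only [Finset.mem_filter, Finset.mem_range, id] at ha hmax
  refine ⟨a, b, ha.1, hbn, ha.2, hb, hmin, fun i hai hib => ?_⟩
  have h1 := hmin i hib
  by_contra hcon
  have := hmax i ⟨hib, by omega⟩
  omega

/-- A single step of the chain. -/
theorem exists_move (n : ℕ) (l m : ℕ → ℕ) (hl : IsPartitionOf n l) (hm : IsPartitionOf n m)
    (hdom : Dominates l m) (hne : l ≠ m) :
    ∃ y, IsPartitionOf n y ∧ Dominates l y ∧ Dominates y m ∧ l ≠ y ∧ qdiff n l y = 1 ∧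
      qdiff n y m + 1 = qdiff n l m ∧ ∀ r, Towards (l r) (y r) (m r) := by
  obtain ⟨a, b, hab, hbn, ha, hb, hmin, hmid⟩ := exists_rows n l m hl hm hdom hne
  obtain ⟨hla, hl0, hls⟩ := hl
  have hma := hm.1
  have hsum := sum_moveBox l hab.ne (by omega : 0 < l a)
  refine ⟨moveBox l a b, ⟨?_, ?_, ?_⟩, ?_, ?_, ?_,
    qdiff_self_moveBox n l hab.ne (by omega) hbn (by omega),
    qdiff_moveBox n l m hab.ne (by omega) hbn ha hb, ?_⟩
  · refine antitone_nat_of_succ_le fun i => ?_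
    have h1 := hla (Nat.le_succ i)
    have h2 := hma (Nat.le_succ i)
    have h3 := hmid (i + 1)
    have h4 := hmin i
    simp only [Nat.succ_eq_add_one] at h1 h2
    unfold moveBox
    grind
  · intro i hi
    have := hl0 i hi
    unfold moveBox
    grind
  · have := hsum n
    rw [if_pos (by omega), if_pos hbn] at this
    omega
  · intro j
    have := hsum j
    split_ifs at this <;> omega
  · intro j
    have h1 := hsum j
    have h2 := hdom j
    by_cases hj : a < j ∧ j ≤ b
    · -- Only in this range does the move lower the partial sum.
      have hlt : ∑ i ∈ Finset.range j, m i < ∑ i ∈ Finset.range j, l i := by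
        refine Finset.sum_lt_sum (fun i hi => hmin i ?_) ⟨a, Finset.mem_range.2 hj.1, ha⟩
        have := Finset.mem_range.1 hi
        omega
      split_ifs at h1 <;> omega
    · split_ifs at h1 <;> omega
  · intro h
    have := congrFun h a
    simp only [moveBox, if_true] at this
    omega
  · intro r
    unfold Towards moveBox
    grind

/-- The chain, with each step going towards `m` in every row. -/
theorem exists_chain (n : ℕ) (m : ℕ → ℕ) (hm : IsPartitionOf n m) (q : ℕ) :
    ∀ l : ℕ → ℕ, IsPartitionOf n l → Dominates l m → qdiff n l m = q →
    ∃ f : ℕ → ℕ → ℕ, f 0 = l ∧ f q = m ∧ (∀ i, i ≤ q → IsPartitionOf n (f i)) ∧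
      ∀ i, i < q → (Dominates (f i) (f (i + 1)) ∧ f i ≠ f (i + 1) ∧
          qdiff n (f i) (f (i + 1)) = 1) ∧
        ∀ r, Towards (f i r) (f (i + 1) r) (m r) := by
  induction q with
  | zero =>
    intro l hl hdom hq
    have hlm : l = m := by
      by_contra hne
      obtain ⟨y, -, -, -, -, -, h, -⟩ := exists_move n l m hl hm hdom hne
      omega
    exact ⟨fun _ => l, rfl, hlm, fun _ _ => hl, fun i hi => absurd hi (Nat.not_lt_zero i)⟩
  | succ q ih =>
    intro l hl hdom hq
    have hne : l ≠ m := by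
      rintro rfl
      simp [qdiff] at hq
    obtain ⟨y, hy, hly, hym, hne', h1, hqy, htow⟩ := exists_move n l m hl hm hdom hne
    obtain ⟨f, hf0, hfq, hfp, hfs⟩ := ih y hy hym (by omega)
    refine ⟨fun i => Nat.casesOn i l f, rfl, hfq, ?_, ?_⟩
    · rintro (_ | i) hi
      · exact hl
      · exact hfp i (by omega)
    · rintro (_ | i) hi
      · subst hf0
        exact ⟨⟨hly, hne', h1⟩, htow⟩
      · exact hfs i (by omega)

/-- If `λ > μ` in dominance order, there is a chain
`λ = λ⁰ > λ¹ > ⋯ > λ^q = μ` of partitions of `n` with `q = q(λ, μ)` and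
`q(λ^i, λ^{i+1}) = 1` at each step, which moreover is monotone in every row and in
every column of the dual partitions. -/
theorem chain_of_dominance (n : ℕ) (l m : ℕ → ℕ)
    (hl : IsPartitionOf n l) (hm : IsPartitionOf n m)
    (hdom : Dominates l m) (hne : l ≠ m) :
    ∃ f : ℕ → ℕ → ℕ,
      f 0 = l ∧ f (qdiff n l m) = m ∧
      (∀ i, i ≤ qdiff n l m → IsPartitionOf n (f i)) ∧
      (∀ i, i < qdiff n l m →
        Dominates (f i) (f (i + 1)) ∧ f i ≠ f (i + 1) ∧
          qdiff n (f i) (f (i + 1)) = 1) ∧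
      (∀ r, (∀ i j, i ≤ j → j ≤ qdiff n l m → f i r ≤ f j r) ∨
            (∀ i j, i ≤ j → j ≤ qdiff n l m → f j r ≤ f i r)) ∧
      (∀ c, (∀ i j, i ≤ j → j ≤ qdiff n l m →
                dualPart n (f i) c ≤ dualPart n (f j) c) ∨
            (∀ i j, i ≤ j → j ≤ qdiff n l m →
                dualPart n (f j) c ≤ dualPart n (f i) c)) := by
  obtain ⟨f, hf0, hfq, hfp, hfs⟩ := exists_chain n m hm (qdiff n l m) l hl hdom rfl
  refine ⟨f, hf0, hfq, hfp, fun i hi => (hfs i hi).1, fun r => ?_, fun c => ?_⟩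
  · exact monotone_or_antitone_of_towards (fun i => f i r) (m r) _ fun i hi => (hfs i hi).2 r
  · exact monotone_or_antitone_of_towards (fun i => dualPart n (f i) c) (dualPart n m c) _
      fun i hi => dualPart_between n (f i) m (f (i + 1)) (hfp i hi.le).1 hm.1 (hfs i hi).2 c
end

section
/- Let λ ≥ μ be two partitions of n in the dominance order. Then Σ_j C(μ̂_j + 1, 2) ≥ Σ_j C(λ̂_j + 1, 2), where λ̂, μ̂ are the dual partitions and C(m, 2) = m(m−1)/2; equivalently, r(λ, μ) ≥ 0. -/
/-- Since `l` is nonincreasing, a column of its Young diagram is an initial segment of rows. -/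
lemma filter_eq_range_dualPart (n : ℕ) (l : ℕ → ℕ) (hl : Antitone l) (c : ℕ) :
    (Finset.range n).filter (fun i => c + 1 ≤ l i) = Finset.range (dualPart n l c) := by
  have hlower : IsLowerSet {i | i < n ∧ c + 1 ≤ l i} := fun a b hba ha =>
    ⟨hba.trans_lt ha.1, ha.2.trans (hl hba)⟩
  symm
  apply Finset.eq_of_subset_of_card_le _ (by simp [dualPart])
  intro i hi
  by_contra hnot
  have hsub : (Finset.range n).filter (fun i => c + 1 ≤ l i) ⊆ Finset.range i := by
    intro k hk
    rw [Finset.mem_range]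
    by_contra! hik
    have hk' : k < n ∧ c + 1 ≤ l k := by simpa using hk
    exact hnot (by simpa using hlower hik hk')
  have hcard := Finset.card_le_card hsub
  rw [Finset.card_range] at hcard
  exact absurd (Finset.mem_range.mp hi) (not_lt.mpr hcard)

lemma sum_range_succ_eq_choose (k : ℕ) :
    ∑ i ∈ Finset.range k, (i + 1) = (k + 1).choose 2 := by
  induction k with
  | zero => simp
  | succ k ih =>
    rw [Finset.sum_range_succ, ih, Nat.choose_succ_succ' (k + 1) 1, Nat.choose_one_right, add_comm]

/-- Double counting of the Young diagram whose row `i` is filled with the number `i + 1`. -/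
lemma sum_choose_dualPart (n : ℕ) (l : ℕ → ℕ) (hl : IsPartitionOf n l) :
    ∑ j ∈ Finset.range n, (dualPart n l j + 1).choose 2 =
      ∑ i ∈ Finset.range n, (i + 1) * l i := by
  obtain ⟨hanti, -, hsum⟩ := hl
  have hcol : ∀ j, (dualPart n l j + 1).choose 2 =
      ∑ i ∈ Finset.range n, if j + 1 ≤ l i then i + 1 else 0 := fun j => by
    rw [← sum_range_succ_eq_choose, ← filter_eq_range_dualPart n l hanti j, Finset.sum_filter]
  simp_rw [hcol]
  rw [Finset.sum_comm]
  refine Finset.sum_congr rfl fun i hi => ?_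
  -- Every part is at most `n`, so the `n` columns exhaust row `i`.
  have hle : l i ≤ n := hsum ▸ Finset.single_le_sum (fun _ _ => Nat.zero_le _) hi
  have hrow : (Finset.range n).filter (fun j => j + 1 ≤ l i) = Finset.range (l i) := by
    ext j
    simp only [Finset.mem_filter, Finset.mem_range]
    omega
  rw [← Finset.sum_filter, hrow, Finset.sum_const, Finset.card_range, smul_eq_mul, mul_comm]

/-- Summation by parts. -/
lemma sum_succ_mul_add_sum_partial (l : ℕ → ℕ) (k : ℕ) :
    ∑ i ∈ Finset.range k, (i + 1) * l i +
        ∑ j ∈ Finset.range k, ∑ i ∈ Finset.range j, l i =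
      k * ∑ i ∈ Finset.range k, l i := by
  induction k with
  | zero => simp
  | succ k ih =>
    rw [Finset.sum_range_succ, Finset.sum_range_succ _ k, Finset.sum_range_succ l k]
    linear_combination ih

/-- If `λ ≥ μ` in dominance order then `Σ_j C(μ̂_j+1, 2) ≥ Σ_j C(λ̂_j+1, 2)`,
i.e. `r(λ, μ) ≥ 0`. -/
theorem rdiff_nonneg (n : ℕ) (l m : ℕ → ℕ)
    (hl : IsPartitionOf n l) (hm : IsPartitionOf n m) (hdom : Dominates l m) :
    (∑ j ∈ Finset.range n, (dualPart n l j + 1).choose 2 ≤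
        ∑ j ∈ Finset.range n, (dualPart n m j + 1).choose 2) ∧
      0 ≤ rdiff n l m := by
  have hle : ∑ j ∈ Finset.range n, (dualPart n l j + 1).choose 2 ≤
      ∑ j ∈ Finset.range n, (dualPart n m j + 1).choose 2 := by
    rw [sum_choose_dualPart n l hl, sum_choose_dualPart n m hm]
    have hpl := sum_succ_mul_add_sum_partial l n
    have hpm := sum_succ_mul_add_sum_partial m n
    rw [hl.2.2] at hpl
    rw [hm.2.2] at hpm
    have hpartial := Finset.sum_le_sum fun j (_ : j ∈ Finset.range n) => hdom j
    omega
  refine ⟨hle, ?_⟩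
  rw [rdiff, sub_nonneg]
  exact_mod_cast hle
end

section
/- Let λ ≥ μ be two partitions of n in the dominance order. Then the following are equivalent: (1) λ = μ; (2) c(λ, μ) = 0; (3) r(λ, μ) = 0. -/
/-- Abel summation: a nonincreasing weight paired with a sequence whose partial sums are
nonnegative. The lower bound vanishes when the total sum of `d` does. -/
theorem mul_sum_le_sum_mul (a d : ℕ → ℤ) (ha : Antitone a)
    (hd : ∀ k, 0 ≤ ∑ i ∈ Finset.range k, d i) (n : ℕ) :
    a n * ∑ i ∈ Finset.range n, d i ≤ ∑ i ∈ Finset.range n, a i * d i := by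
  induction n with
  | zero => simp
  | succ k ih =>
    rw [Finset.sum_range_succ (fun i => a i * d i)]
    have h1 : a (k + 1) * ∑ i ∈ Finset.range (k + 1), d i
        ≤ a k * ∑ i ∈ Finset.range (k + 1), d i :=
      mul_le_mul_of_nonneg_right (ha (Nat.le_succ k)) (hd _)
    rw [Finset.sum_range_succ d k, mul_add] at *
    linarith

theorem two_mul_choose_succ_two (a : ℕ) : 2 * ((a + 1).choose 2 : ℤ) = (a : ℤ) ^ 2 + a := by
  have h2 : (a + 1).choose 2 * 2 = (a + 1) * a := by
    rw [Nat.choose_two_right, Nat.add_sub_cancel]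
    exact Nat.div_mul_cancel (by
      rw [mul_comm]; exact (Nat.even_mul_succ_self a).two_dvd)
  zify at h2
  linarith

theorem eq_of_cdiff_eq_zero (n : ℕ) (l m : ℕ → ℕ) (hl : IsPartitionOf n l)
    (hm : IsPartitionOf n m) (hdom : Dominates l m) (h : cdiff n l m = 0) : l = m := by
  obtain ⟨-, hl0, hls⟩ := hl
  obtain ⟨hma, hm0, hms⟩ := hm
  have hsum : ∑ i ∈ Finset.range n, ((l i : ℤ) - m i) = 0 := by
    rw [Finset.sum_sub_distrib, sub_eq_zero]
    exact_mod_cast hls.trans hms.symm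
  have habel := mul_sum_le_sum_mul (fun i => (m i : ℤ)) (fun i => (l i : ℤ) - m i)
    (fun i j hij => Int.ofNat_le.2 (hma hij))
    (fun k => by
      rw [Finset.sum_sub_distrib, sub_nonneg]
      exact_mod_cast hdom k) n
  rw [hsum, mul_zero] at habel
  have hexp : 2 * cdiff n l m = ∑ i ∈ Finset.range n, ((l i : ℤ) - m i) ^ 2
      + 2 * ∑ i ∈ Finset.range n, (m i : ℤ) * ((l i : ℤ) - m i)
      + ∑ i ∈ Finset.range n, ((l i : ℤ) - m i) := by
    unfold cdiff
    rw [← Finset.sum_sub_distrib, Finset.mul_sum, Finset.mul_sum, ← Finset.sum_add_distrib,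
      ← Finset.sum_add_distrib]
    refine Finset.sum_congr rfl fun i _ => ?_
    rw [mul_sub, two_mul_choose_succ_two, two_mul_choose_succ_two]
    ring
  have hsq : ∑ i ∈ Finset.range n, ((l i : ℤ) - m i) ^ 2 = 0 :=
    le_antisymm (by rw [h, hsum] at hexp; linarith) (Finset.sum_nonneg fun i _ => sq_nonneg _)
  rw [Finset.sum_eq_zero_iff_of_nonneg fun i _ => sq_nonneg _] at hsq
  funext i
  by_cases hi : i < n
  · have := pow_eq_zero_iff (two_ne_zero) |>.1 (hsq i (Finset.mem_range.2 hi))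
    omega
  · rw [hl0 i (not_lt.1 hi), hm0 i (not_lt.1 hi)]

/-- In a partition the parts exceeding `c` are exactly the first `dualPart n l c` ones. -/
theorem lt_dualPart_iff {n : ℕ} {l : ℕ → ℕ} (hl : IsPartitionOf n l) (c i : ℕ) :
    i < dualPart n l c ↔ c + 1 ≤ l i := by
  obtain ⟨hla, hl0, -⟩ := hl
  constructor
  · intro h
    by_contra hc
    have hsub : ((Finset.range n).filter fun i => c + 1 ≤ l i) ⊆ Finset.range i := by
      intro j hj
      rw [Finset.mem_filter] at hj
      rw [Finset.mem_range]
      by_contra hij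
      exact hc (hj.2.trans (hla (not_lt.1 hij)))
    have := Finset.card_le_card hsub
    rw [Finset.card_range] at this
    exact absurd h (not_lt.2 this)
  · intro h
    have hsub : Finset.range (i + 1) ⊆ (Finset.range n).filter fun i => c + 1 ≤ l i := by
      intro j hj
      rw [Finset.mem_range] at hj
      have hj' : c + 1 ≤ l j := h.trans (hla (by omega))
      rw [Finset.mem_filter, Finset.mem_range]
      refine ⟨?_, hj'⟩
      by_contra hn
      have := hl0 j (not_lt.1 hn)
      omega
    have := Finset.card_le_card hsub
    rw [Finset.card_range] at this
    exact this

theorem eq_of_dualPart_eq {n : ℕ} {l m : ℕ → ℕ} (hl : IsPartitionOf n l)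
    (hm : IsPartitionOf n m) (h : dualPart n l = dualPart n m) : l = m := by
  have key : ∀ i c, c + 1 ≤ l i ↔ c + 1 ≤ m i := fun i c => by
    rw [← lt_dualPart_iff hl, ← lt_dualPart_iff hm, h]
  funext i
  have h1 := key i (l i)
  have h2 := key i (m i)
  omega

/-- Both sides count the cells of the Young diagram of `l` in its first `k` columns. -/
theorem sum_dualPart (n : ℕ) (l : ℕ → ℕ) (k : ℕ) :
    ∑ c ∈ Finset.range k, dualPart n l c = ∑ i ∈ Finset.range n, min (l i) k := by
  simp only [dualPart, Finset.card_filter]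
  rw [Finset.sum_comm]
  refine Finset.sum_congr rfl fun i _ => ?_
  rw [← Finset.card_filter]
  have : ((Finset.range k).filter fun c => c + 1 ≤ l i) = Finset.range (min (l i) k) := by
    ext c
    simp only [Finset.mem_filter, Finset.mem_range, lt_min_iff]
    omega
  rw [this, Finset.card_range]

theorem part_le {n : ℕ} {l : ℕ → ℕ} (hl : IsPartitionOf n l) (i : ℕ) : l i ≤ n := by
  by_cases hi : i < n
  · calc l i ≤ ∑ i ∈ Finset.range n, l i :=
        Finset.single_le_sum (fun _ _ => Nat.zero_le _) (Finset.mem_range.2 hi)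
      _ = n := hl.2.2
  · rw [hl.2.1 i (not_lt.1 hi)]
    exact Nat.zero_le n

theorem isPartitionOf_dualPart {n : ℕ} {l : ℕ → ℕ} (hl : IsPartitionOf n l) :
    IsPartitionOf n (dualPart n l) := by
  refine ⟨fun a b hab => ?_, fun c hc => ?_, ?_⟩
  · exact Finset.card_le_card fun i hi => by
      simp only [Finset.mem_filter] at hi ⊢
      exact ⟨hi.1, by omega⟩
  · rw [dualPart, Finset.card_eq_zero, Finset.filter_eq_empty_iff]
    intro i _
    have := part_le hl i
    omega
  · rw [sum_dualPart]
    conv_rhs => rw [← hl.2.2]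
    exact Finset.sum_congr rfl fun i _ => min_eq_left (part_le hl i)

/-- By `sum_dualPart`, the claim is `∑ (μ_i - k)⁺ ≤ ∑ (λ_i - k)⁺` for all `k`. The left side
is supported on the first `p = μ̂_k` (0-indexed) parts, where dominance compares the
partial sums of length `p`. -/
theorem dominates_dualPart {n : ℕ} {l m : ℕ → ℕ} (hl : IsPartitionOf n l)
    (hm : IsPartitionOf n m) (hdom : Dominates l m) :
    Dominates (dualPart n m) (dualPart n l) := by
  intro k
  rw [sum_dualPart, sum_dualPart]
  have split : ∀ f : ℕ → ℕ, ∑ i ∈ Finset.range n, min (f i) k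
      + ∑ i ∈ Finset.range n, (f i - k) = ∑ i ∈ Finset.range n, f i := fun f => by
    rw [← Finset.sum_add_distrib]
    exact Finset.sum_congr rfl fun i _ => by omega
  have hsl := split l
  have hsm := split m
  rw [hl.2.2] at hsl
  rw [hm.2.2] at hsm
  set p := dualPart n m k with hp
  have hpn : p ≤ n := (Finset.card_filter_le _ _).trans (Finset.card_range n).le
  have hmp : ∑ i ∈ Finset.range n, (m i - k) = ∑ i ∈ Finset.range p, (m i - k) := by
    refine (Finset.sum_subset (Finset.range_mono hpn) fun i _ hi => ?_).symm
    rw [Finset.mem_range, hp, lt_dualPart_iff hm] at hi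
    omega
  have hmk : ∑ i ∈ Finset.range p, (m i - k) + p * k = ∑ i ∈ Finset.range p, m i := by
    have : ∑ i ∈ Finset.range p, (m i - k + k) = ∑ i ∈ Finset.range p, m i :=
      Finset.sum_congr rfl fun i hi => by
        rw [Finset.mem_range, hp, lt_dualPart_iff hm] at hi
        omega
    rw [← this, Finset.sum_add_distrib]
    simp
  have hlk : ∑ i ∈ Finset.range p, l i ≤ ∑ i ∈ Finset.range p, (l i - k) + p * k := by
    have : ∑ i ∈ Finset.range p, l i ≤ ∑ i ∈ Finset.range p, (l i - k + k) :=
      Finset.sum_le_sum fun i _ => by omega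
    rw [Finset.sum_add_distrib] at this
    simpa using this
  have hlp : ∑ i ∈ Finset.range p, (l i - k) ≤ ∑ i ∈ Finset.range n, (l i - k) :=
    Finset.sum_le_sum_of_subset (Finset.range_mono hpn)
  have hd := hdom p
  omega

/-- For `λ ≥ μ` in dominance order, the conditions `λ = μ`, `c(λ, μ) = 0` and
`r(λ, μ) = 0` are equivalent. -/
theorem eq_iff_cdiff_eq_zero_iff_rdiff_eq_zero (n : ℕ) (l m : ℕ → ℕ)
    (hl : IsPartitionOf n l) (hm : IsPartitionOf n m) (hdom : Dominates l m) :
    (l = m ↔ cdiff n l m = 0) ∧ (l = m ↔ rdiff n l m = 0) := by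
  refine ⟨⟨?_, eq_of_cdiff_eq_zero n l m hl hm hdom⟩, ⟨?_, fun h => ?_⟩⟩
  · rintro rfl
    exact sub_self _
  · rintro rfl
    exact sub_self _
  · -- `rdiff n l m` unfolds to `cdiff n (dualPart n m) (dualPart n l)`.
    exact (eq_of_dualPart_eq hm hl (eq_of_cdiff_eq_zero n _ _ (isPartitionOf_dualPart hm)
      (isPartitionOf_dualPart hl) (dominates_dualPart hl hm hdom) h)).symm
end

section
/- Let λ ≥ μ be two partitions of n in the dominance order, let t = λ_1, and for i = 1, …, t+1 define d_i^a := Σ_{j=i}^{t} (λ̂_j − μ̂_j) (so d_{t+1}^a = 0) and d_i^b := d_{i+1}^a. Then Σ_{i=1}^{t} max{d_i^a, d_i^b} ≤ c(λ, μ) + q(λ, μ). -/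
/-- With `t = λ_1` columns, `dA i` (for 0-indexed `i`, corresponding to the 1-indexed
`d_{i+1}^a`) is `Σ_{j=i+1}^{t} (λ̂_j − μ̂_j)` (1-indexed columns `j`); the corresponding
`d_{i+1}^b` is `dA (i+1)`. -/
def dA (n : ℕ) (l m : ℕ → ℕ) (i : ℕ) : ℤ :=
  ∑ j ∈ Finset.Ico i (l 0), ((dualPart n l j : ℤ) - (dualPart n m j : ℤ))

theorem sum_range_sum_Ico (f : ℕ → ℤ) (t : ℕ) :
    ∑ k ∈ Finset.range t, ∑ j ∈ Finset.Ico k t, f j =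
      ∑ j ∈ Finset.range t, ((j : ℤ) + 1) * f j := by
  induction t with
  | zero => simp
  | succ t ih =>
    rw [Finset.sum_range_succ _ t, Finset.sum_range_succ _ t, ← ih]
    have h : ∀ k ∈ Finset.range t, ∑ j ∈ Finset.Ico k (t + 1), f j =
        ∑ j ∈ Finset.Ico k t, f j + f t := fun k hk =>
      Finset.sum_Ico_succ_top (Finset.mem_range.mp hk).le f
    rw [Finset.sum_congr rfl h, Finset.sum_add_distrib]
    simp
    ring

/-- A row of length `a` contributes `1 + ⋯ + a` to `∑_j j λ̂_j`. -/
theorem sum_succ_ite (a t : ℕ) (h : a ≤ t) :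
    ∑ j ∈ Finset.range t, ((j : ℤ) + 1) * (if j + 1 ≤ a then 1 else 0) =
      ((a + 1).choose 2 : ℤ) := by
  induction t, h using Nat.le_induction with
  | base =>
    induction a with
    | zero => simp
    | succ a ih =>
      have h : ∀ j ∈ Finset.range a, ((j : ℤ) + 1) * (if j + 1 ≤ a + 1 then 1 else 0) =
          ((j : ℤ) + 1) * (if j + 1 ≤ a then 1 else 0) := fun j hj => by
        have := Finset.mem_range.mp hj
        rw [if_pos (by omega), if_pos (by omega)]
      rw [Finset.sum_range_succ, Finset.sum_congr rfl h, ih, Nat.choose_succ_succ' (a + 1) 1]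
      simp
      ring
  | succ t ht ih =>
    rw [Finset.sum_range_succ, ih, if_neg (by omega)]
    simp

theorem sum_mul_dualPart (n t : ℕ) (l : ℕ → ℕ) (h : ∀ i, l i ≤ t) :
    ∑ j ∈ Finset.range t, ((j : ℤ) + 1) * (dualPart n l j : ℤ) =
      ∑ i ∈ Finset.range n, ((l i + 1).choose 2 : ℤ) := by
  simp only [dualPart, Finset.card_filter, Nat.cast_sum, Finset.mul_sum]
  rw [Finset.sum_comm]
  refine Finset.sum_congr rfl fun i _ => ?_
  rw [← sum_succ_ite _ _ (h i)]
  simp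

theorem sum_dA (n : ℕ) (l m : ℕ → ℕ) (hl : ∀ i, l i ≤ l 0) (hm : ∀ i, m i ≤ l 0) :
    ∑ i ∈ Finset.range (l 0), dA n l m i = cdiff n l m := by
  simp only [dA, cdiff]
  rw [sum_range_sum_Ico, ← sum_mul_dualPart n _ l hl, ← sum_mul_dualPart n _ m hm,
    ← Finset.sum_sub_distrib]
  exact Finset.sum_congr rfl fun _ _ => by ring

/-- The excess `μ̂_j - λ̂_j` is at most the number of rows that reach column `j` in `μ` but not
in `λ`. -/
theorem neg_dual_sub_le (n : ℕ) (l m : ℕ → ℕ) (j : ℕ) :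
    dualPart n m j ≤ dualPart n l j +
      ∑ i ∈ Finset.range n, (if l i ≤ j ∧ j < m i then 1 else 0) := by
  simp only [dualPart, Finset.card_filter]
  rw [← Finset.sum_add_distrib]
  refine Finset.sum_le_sum fun i _ => ?_
  split_ifs <;> omega

theorem sum_interval_ite (a b t : ℕ) (h : b ≤ t) :
    ∑ j ∈ Finset.range t, (if a ≤ j ∧ j < b then 1 else 0) = b - a := by
  rw [← Finset.card_filter, ← Nat.card_Ico]
  congr 1
  ext j
  simp only [Finset.mem_filter, Finset.mem_range, Finset.mem_Ico]
  omega

/-- Since `λ` and `μ` have the same size, the positive part of `μ - λ` carries exactly half of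
`∑_i |λ_i - μ_i|`; in particular the division by 2 in `qdiff` is exact. -/
theorem sum_tsub_eq_qdiff (n : ℕ) (l m : ℕ → ℕ)
    (h : ∑ i ∈ Finset.range n, l i = ∑ i ∈ Finset.range n, m i) :
    ∑ i ∈ Finset.range n, (m i - l i) = qdiff n l m := by
  have h1 : ∑ i ∈ Finset.range n, ((l i : ℤ) - (m i : ℤ)).natAbs + ∑ i ∈ Finset.range n, m i =
      2 * ∑ i ∈ Finset.range n, (m i - l i) + ∑ i ∈ Finset.range n, l i := by
    rw [Finset.mul_sum, ← Finset.sum_add_distrib, ← Finset.sum_add_distrib]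
    exact Finset.sum_congr rfl fun i _ => by omega
  unfold qdiff
  omega

/-- For `λ ≥ μ` in dominance order,
`Σ_{i=1}^{t} max{d_i^a, d_i^b} ≤ c(λ, μ) + q(λ, μ)`. -/
theorem sum_max_dA_le (n : ℕ) (l m : ℕ → ℕ)
    (hl : IsPartitionOf n l) (hm : IsPartitionOf n m) (hdom : Dominates l m) :
    ∑ i ∈ Finset.range (l 0), max (dA n l m i) (dA n l m (i + 1)) ≤
      cdiff n l m + (qdiff n l m : ℤ) := by
  have h0 : m 0 ≤ l 0 := by simpa using hdom 1
  have hl0 : ∀ i, l i ≤ l 0 := fun i => hl.1 (Nat.zero_le i)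
  have hm0 : ∀ i, m i ≤ l 0 := fun i => (hm.1 (Nat.zero_le i)).trans h0
  have hq : ∑ j ∈ Finset.range (l 0), ∑ i ∈ Finset.range n,
      (if l i ≤ j ∧ j < m i then 1 else 0) = qdiff n l m := by
    rw [Finset.sum_comm, ← sum_tsub_eq_qdiff n l m (hl.2.2.trans hm.2.2.symm)]
    exact Finset.sum_congr rfl fun i _ => sum_interval_ite _ _ _ (hm0 i)
  rw [← sum_dA n l m hl0 hm0, ← hq, Nat.cast_sum, ← Finset.sum_add_distrib]
  refine Finset.sum_le_sum fun j hj => ?_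
  have hstep : dA n l m j = ((dualPart n l j : ℤ) - (dualPart n m j : ℤ)) + dA n l m (j + 1) :=
    Finset.sum_eq_sum_Ico_succ_bot (Finset.mem_range.mp hj) _
  have hle := neg_dual_sub_le n l m j
  omega
end

section
/- Let λ > μ be two partitions of n in the dominance order with q(λ, μ) = 1, let t = λ_1, and for i = 1, …, t+1 define d_i^a := Σ_{j=i}^{t} (λ̂_j − μ̂_j) (so d_{t+1}^a = 0) and d_i^b := d_{i+1}^a. Then Σ_{i=1}^{t} max{d_i^a, d_i^b} = c(λ, μ) + 1. -/
/-- `l` is obtained from `m` by moving one box from row `b` up to row `a < b`. -/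
def IsMove (l m : ℕ → ℕ) (a b : ℕ) : Prop :=
  a < b ∧ l a = m a + 1 ∧ m b = l b + 1 ∧ ∀ i, i ≠ a → i ≠ b → l i = m i

theorem exists_move_s14 {n : ℕ} {l m : ℕ → ℕ}
    (hl : IsPartitionOf n l) (hm : IsPartitionOf n m)
    (hdom : Dominates l m) (hne : l ≠ m) (hq : qdiff n l m = 1) :
    ∃ a b, b < n ∧ IsMove l m a b := by
  obtain ⟨_, hl0, hls⟩ := hl
  obtain ⟨_, hm0, hms⟩ := hm
  have hle : ¬ ∀ i ∈ Finset.range n, l i ≤ m i := by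
    intro h
    apply hne
    funext i
    by_cases hi : i < n
    · exact (Finset.sum_eq_sum_iff_of_le h).1 (hls.trans hms.symm) i (Finset.mem_range.2 hi)
    · rw [hl0 i (by omega), hm0 i (by omega)]
  have hge : ¬ ∀ i ∈ Finset.range n, m i ≤ l i := by
    intro h
    apply hne
    funext i
    by_cases hi : i < n
    · exact ((Finset.sum_eq_sum_iff_of_le h).1 (hms.trans hls.symm) i (Finset.mem_range.2 hi)).symm
    · rw [hl0 i (by omega), hm0 i (by omega)]
  push Not at hle hge
  obtain ⟨a, han, ha⟩ := hle
  obtain ⟨b, hbn, hb⟩ := hge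
  have hab : a ≠ b := by rintro rfl; omega
  have hbe : b ∈ (Finset.range n).erase a := Finset.mem_erase.2 ⟨hab.symm, hbn⟩
  unfold qdiff at hq
  rw [← Finset.add_sum_erase _ _ han, ← Finset.add_sum_erase _ _ hbe] at hq
  -- The rounding in `qdiff` only gives `∑ |l i - m i| ≤ 3`. The value `3` is
  -- excluded by parity: `|l i - m i| ≡ l i - m i` modulo `2`, and the sum of `l i - m i` is `0`.
  have hsum : ∑ i ∈ Finset.range n, ((l i : ℤ) - m i) = 0 := by
    rw [Finset.sum_sub_distrib, ← Nat.cast_sum, ← Nat.cast_sum, hls, hms, sub_self]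
  rw [← Finset.add_sum_erase _ _ han, ← Finset.add_sum_erase _ _ hbe] at hsum
  have hpar : (∑ i ∈ ((Finset.range n).erase a).erase b, ((l i : ℤ) - m i).natAbs : ℕ) = 0 ∨
      (∑ i ∈ ((Finset.range n).erase a).erase b, ((l i : ℤ) - m i).natAbs : ℕ) = 1 := by omega
  have hmod : ((∑ i ∈ ((Finset.range n).erase a).erase b, ((l i : ℤ) - m i).natAbs : ℕ) : ℤ) ≡
      ∑ i ∈ ((Finset.range n).erase a).erase b, ((l i : ℤ) - m i) [ZMOD 2] := by
    rw [Nat.cast_sum]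
    apply Int.ModEq.sum
    intro i _
    unfold Int.ModEq
    omega
  unfold Int.ModEq at hmod
  have hrest : ∑ i ∈ ((Finset.range n).erase a).erase b, ((l i : ℤ) - m i).natAbs = 0 := by
    omega
  have hoff : ∀ i, i ≠ a → i ≠ b → l i = m i := by
    intro i hia hib
    by_cases hi : i < n
    · have := Finset.sum_eq_zero_iff.1 hrest i (by simp [hia, hib, hi])
      omega
    · rw [hl0 i (by omega), hm0 i (by omega)]
  refine ⟨a, b, Finset.mem_range.1 hbn, ?_, by omega, by omega, hoff⟩
  -- If `b < a`, the first `b + 1` rows of `l` hold fewer boxes than those of `m`.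
  by_contra hlt
  refine absurd (hdom (b + 1)) (not_le.2 (Finset.sum_lt_sum ?_ ⟨b, by simp, hb⟩))
  intro i hi
  rw [Finset.mem_range] at hi
  by_cases hib : i = b
  · subst hib; omega
  · exact (hoff i (by omega) hib).le

/-- The moved box enters column `m a` and leaves column `l b = m b - 1` (0-indexed). -/
theorem dualPart_sub {n : ℕ} {l m : ℕ → ℕ} {a b : ℕ} (hbn : b < n) (h : IsMove l m a b) (c : ℕ) :
    (dualPart n l c : ℤ) - dualPart n m c =
      (if c = m a then 1 else 0) - (if c = l b then 1 else 0) := by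
  obtain ⟨hab, ha, hb, hoff⟩ := h
  have hterm : ∀ i ∈ Finset.range n,
      ((if c + 1 ≤ l i then 1 else 0) - (if c + 1 ≤ m i then 1 else 0) : ℤ) =
      (if i = a then (if c = m a then 1 else 0) else 0) -
        (if i = b then (if c = l b then 1 else 0) else 0) := by
    intro i _
    by_cases hia : i = a
    · subst hia
      split_ifs <;> omega
    · by_cases hib : i = b
      · subst hib
        split_ifs <;> omega
      · simp [hia, hib, hoff i hia hib]
  unfold dualPart
  rw [← Finset.sum_boole, ← Finset.sum_boole, ← Finset.sum_sub_distrib,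
    Finset.sum_congr rfl hterm, Finset.sum_sub_distrib, Finset.sum_ite_eq', Finset.sum_ite_eq',
    if_pos (Finset.mem_range.2 (hab.trans hbn)), if_pos (Finset.mem_range.2 hbn)]

theorem cdiff_of_move {n : ℕ} {l m : ℕ → ℕ} {a b : ℕ} (hbn : b < n) (h : IsMove l m a b) :
    cdiff n l m = (m a : ℤ) - l b := by
  obtain ⟨hab, ha, hb, hoff⟩ := h
  have hch : ∀ x : ℕ, (x + 1).choose 2 = x + x.choose 2 := by
    intro x
    rw [Nat.choose_succ_succ' x 1, Nat.choose_one_right]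
  have hterm : ∀ i ∈ Finset.range n,
      (((l i + 1).choose 2 : ℤ) - ((m i + 1).choose 2 : ℤ)) =
      (if i = a then (m a + 1 : ℤ) else 0) - (if i = b then (l b + 1 : ℤ) else 0) := by
    intro i _
    by_cases hia : i = a
    · subst hia
      rw [if_pos rfl, if_neg hab.ne, ha, hch (m i + 1)]
      push_cast
      ring
    · by_cases hib : i = b
      · subst hib
        rw [if_neg hia, if_pos rfl, hb, hch (l i + 1)]
        push_cast
        ring
      · simp [hia, hib, hoff i hia hib]
  unfold cdiff
  rw [← Finset.sum_sub_distrib, Finset.sum_congr rfl hterm, Finset.sum_sub_distrib,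
    Finset.sum_ite_eq', Finset.sum_ite_eq', if_pos (Finset.mem_range.2 (hab.trans hbn)),
    if_pos (Finset.mem_range.2 hbn)]
  ring

theorem dA_of_move {n : ℕ} {l m : ℕ → ℕ} {a b : ℕ} (hl : Antitone l) (hm : Antitone m)
    (hbn : b < n) (h : IsMove l m a b) (i : ℕ) :
    dA n l m i = if l b < i ∧ i ≤ m a then 1 else 0 := by
  have hla := hl (Nat.zero_le a)
  have hmab := hm h.1.le
  have ha := h.2.1
  have hb := h.2.2.1
  unfold dA
  rw [Finset.sum_congr rfl fun c _ => dualPart_sub hbn h c, Finset.sum_sub_distrib,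
    Finset.sum_ite_eq', Finset.sum_ite_eq']
  simp only [Finset.mem_Ico]
  split_ifs <;> omega

/-- For `λ > μ` in dominance order with `q(λ, μ) = 1`,
`Σ_{i=1}^{t} max{d_i^a, d_i^b} = c(λ, μ) + 1`. -/
theorem sum_max_dA_eq (n : ℕ) (l m : ℕ → ℕ)
    (hl : IsPartitionOf n l) (hm : IsPartitionOf n m)
    (hdom : Dominates l m) (hne : l ≠ m) (hq : qdiff n l m = 1) :
    ∑ i ∈ Finset.range (l 0), max (dA n l m i) (dA n l m (i + 1)) =
      cdiff n l m + 1 := by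
  obtain ⟨a, b, hbn, h⟩ := exists_move_s14 hl hm hdom hne hq
  have hla := hl.1 (Nat.zero_le a)
  have hmab := hm.1 h.1.le
  have ha := h.2.1
  have hb := h.2.2.1
  have hmax : ∀ i ∈ Finset.range (l 0), max (dA n l m i) (dA n l m (i + 1)) =
      if l b ≤ i ∧ i ≤ m a then 1 else 0 := by
    intro i _
    rw [dA_of_move hl.1 hm.1 hbn h, dA_of_move hl.1 hm.1 hbn h]
    split_ifs <;> omega
  have hfilter : (Finset.range (l 0)).filter (fun i => l b ≤ i ∧ i ≤ m a) =
      Finset.Icc (l b) (m a) := by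
    ext i
    simp only [Finset.mem_filter, Finset.mem_range, Finset.mem_Icc]
    omega
  rw [Finset.sum_congr rfl hmax, Finset.sum_boole, hfilter, Nat.card_Icc, cdiff_of_move hbn h]
  omega
end
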